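/- Let m > 1 be an integer, a ∈ {0,1,…,m−1}, and ν ≥ 1 a natural number. Then S_{m,a}(2^ν) = (1/m) · Σ_{t=1}^{m−1} exp(−2πi t a / m) · Π_{k=0}^{ν−1} (1 − exp(2πi t 2^k / m)). -/

import Mathlib

/-!
The product `∏ k < ν, (1 - z ^ 2 ^ k)` is the generating polynomial
`∑ n < 2 ^ ν, (-1) ^ s n * z ^ n` of the Thue–Morse signs, since expanding it chooses the set of
binary digits of `n` equal to 1. Evaluating it at all `m`-th roots of unity `z` and averaging
against `z ^ (-a)` extracts the terms with `n ≡ a (mod m)`. The root `z = 1` contributes nothing,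
since there every factor `1 - z ^ 2 ^ k` vanishes and `ν ≥ 1` makes the product nonempty.
-/

/-- `s n` is the number of 1's in the binary expansion of `n`. -/
def s (n : ℕ) : ℕ := (Nat.digits 2 n).sum

/-- Newman-like sum `S_{m,a}(x) = Σ_{0 ≤ n < x, n ≡ a (mod m)} (−1)^{s(n)}`. -/
def S (m a x : ℕ) : ℤ :=
  ∑ n ∈ (Finset.range x).filter (fun n => n % m = a), (-1 : ℤ) ^ (s n)

theorem s_two_mul (n : ℕ) : s (2 * n) = s n := by
  rcases n.eq_zero_or_pos with rfl | hn
  · rfl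
  · rw [s, Nat.digits_base_mul one_lt_two hn, List.sum_cons, zero_add, s]

theorem s_two_mul_add_one (n : ℕ) : s (2 * n + 1) = s n + 1 := by
  rw [s, add_comm (2 * n), Nat.digits_add 2 one_lt_two 1 n one_lt_two (.inl one_ne_zero),
    List.sum_cons, add_comm, s]

theorem sum_range_two_mul {M : Type*} [AddCommMonoid M] (f : ℕ → M) (N : ℕ) :
    ∑ n ∈ Finset.range (2 * N), f n = ∑ n ∈ Finset.range N, (f (2 * n) + f (2 * n + 1)) := by
  induction N with
  | zero => simp
  | succ N ih =>
    rw [mul_add_one, Finset.sum_range_succ, Finset.sum_range_succ, Finset.sum_range_succ, ih,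
      add_assoc]

theorem sum_range_two_pow_pow_s_mul_pow {R : Type*} [CommSemiring R] (w z : R) (ν : ℕ) :
    ∑ n ∈ Finset.range (2 ^ ν), w ^ s n * z ^ n =
      ∏ k ∈ Finset.range ν, (1 + w * z ^ 2 ^ k) := by
  induction ν generalizing z with
  | zero => simp [s]
  | succ ν ih =>
    -- Splitting off the lowest binary digit of `n` replaces `z` by `z ^ 2`.
    calc ∑ n ∈ Finset.range (2 ^ (ν + 1)), w ^ s n * z ^ n
        = ∑ n ∈ Finset.range (2 ^ ν),
            (w ^ s (2 * n) * z ^ (2 * n) + w ^ s (2 * n + 1) * z ^ (2 * n + 1)) := by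
          rw [pow_succ', sum_range_two_mul]
      _ = ∑ n ∈ Finset.range (2 ^ ν), w ^ s n * (z ^ 2) ^ n * (1 + w * z) := by
          refine Finset.sum_congr rfl fun n _ => ?_
          rw [s_two_mul, s_two_mul_add_one]
          ring
      _ = (∏ k ∈ Finset.range ν, (1 + w * (z ^ 2) ^ 2 ^ k)) * (1 + w * z) := by
          rw [← Finset.sum_mul, ih]
      _ = ∏ k ∈ Finset.range (ν + 1), (1 + w * z ^ 2 ^ k) := by
          simp only [Finset.prod_range_succ', pow_succ', pow_mul, pow_zero, pow_one]

theorem geom_sum_eq_ite_of_pow_eq_one {K : Type*} [DivisionRing K] [DecidableEq K] {z : K} {m : ℕ}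
    (hz : z ^ m = 1) : ∑ t ∈ Finset.range m, z ^ t = if z = 1 then (m : K) else 0 := by
  split_ifs with h
  · simp [h]
  · rw [geom_sum_eq h, hz, sub_self, zero_div]

section RootsOfUnity

variable {K : Type*} [Field K] {ζ : K} {m : ℕ}

theorem sum_inv_pow_mul_pow_eq_ite_modEq [NeZero m] (hζ : IsPrimitiveRoot ζ m) (a n : ℕ) :
    ∑ t ∈ Finset.range m, (ζ ^ (t * a))⁻¹ * (ζ ^ t) ^ n =
      if n ≡ a [MOD m] then (m : K) else 0 := by
  classical
  have quotient_eq_one_iff : (ζ ^ a)⁻¹ * ζ ^ n = 1 ↔ n ≡ a [MOD m] := by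
    have hfin : IsOfFinOrder ζ := isOfFinOrder_iff_pow_eq_one.2 ⟨m, NeZero.pos m, hζ.pow_eq_one⟩
    rw [inv_mul_eq_one₀ (pow_ne_zero a (hζ.ne_zero (NeZero.ne m))), eq_comm,
      hfin.pow_eq_pow_iff_modEq, ← hζ.eq_orderOf]
  have quotient_pow : ((ζ ^ a)⁻¹ * ζ ^ n) ^ m = 1 := by
    rw [mul_pow, inv_pow, pow_right_comm, pow_right_comm ζ n, hζ.pow_eq_one]
    simp
  calc ∑ t ∈ Finset.range m, (ζ ^ (t * a))⁻¹ * (ζ ^ t) ^ n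
      = ∑ t ∈ Finset.range m, ((ζ ^ a)⁻¹ * ζ ^ n) ^ t := by
        refine Finset.sum_congr rfl fun t _ => ?_
        rw [mul_pow, inv_pow, pow_mul, pow_right_comm ζ t a, pow_right_comm ζ t n]
    _ = if n ≡ a [MOD m] then (m : K) else 0 := by
        simp only [geom_sum_eq_ite_of_pow_eq_one quotient_pow, quotient_eq_one_iff]

theorem sum_filter_modEq_eq_one_div_mul_sum [NeZero m] (hζ : IsPrimitiveRoot ζ m) (a : ℕ)
    (A : Finset ℕ) (f : ℕ → K) :
    ∑ n ∈ A with n ≡ a [MOD m], f n =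
      1 / (m : K) * ∑ t ∈ Finset.range m, (ζ ^ (t * a))⁻¹ * ∑ n ∈ A, f n * (ζ ^ t) ^ n := by
  have hm : (m : K) ≠ 0 := hζ.neZero'.out
  calc ∑ n ∈ A with n ≡ a [MOD m], f n
      = 1 / (m : K) * ∑ n ∈ A, f n * if n ≡ a [MOD m] then (m : K) else 0 := by
        simp only [Finset.sum_filter, mul_ite, mul_zero, Finset.mul_sum]
        refine Finset.sum_congr rfl fun n _ => ?_
        split_ifs <;> field_simp
    _ = 1 / (m : K) * ∑ n ∈ A, ∑ t ∈ Finset.range m, (ζ ^ (t * a))⁻¹ * (f n * (ζ ^ t) ^ n) := by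
        simp only [← sum_inv_pow_mul_pow_eq_ite_modEq hζ, Finset.mul_sum, mul_left_comm]
    _ = 1 / (m : K) * ∑ t ∈ Finset.range m, (ζ ^ (t * a))⁻¹ * ∑ n ∈ A, f n * (ζ ^ t) ^ n := by
        rw [Finset.sum_comm]
        simp only [Finset.mul_sum]

theorem S_eq_sum_filter_modEq {a : ℕ} (ha : a < m) (x : ℕ) :
    S m a x = ∑ n ∈ Finset.range x with n ≡ a [MOD m], (-1) ^ s n := by
  simp only [S, Nat.ModEq, Nat.mod_eq_of_lt ha]

theorem S_two_pow_formula_general (hζ : IsPrimitiveRoot ζ m) {a : ℕ} (ha : a < m)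
    {ν : ℕ} (hν : 1 ≤ ν) :
    (S m a (2 ^ ν) : K) =
      1 / (m : K) * ∑ t ∈ Finset.Icc 1 (m - 1),
        (ζ ^ (t * a))⁻¹ * ∏ k ∈ Finset.range ν, (1 - ζ ^ (t * 2 ^ k)) := by
  have : NeZero m := ⟨Nat.ne_zero_of_lt ha⟩
  have trivial_root : ∏ k ∈ Finset.range ν, (1 - ζ ^ (0 * 2 ^ k)) = 0 :=
    Finset.prod_eq_zero (Finset.mem_range.2 hν) (by simp)
  calc (S m a (2 ^ ν) : K)
      = ∑ n ∈ Finset.range (2 ^ ν) with n ≡ a [MOD m], (-1) ^ s n := by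
        simp [S_eq_sum_filter_modEq ha]
    _ = 1 / (m : K) * ∑ t ∈ Finset.range m,
          (ζ ^ (t * a))⁻¹ * ∏ k ∈ Finset.range ν, (1 - ζ ^ (t * 2 ^ k)) := by
        simp only [sum_filter_modEq_eq_one_div_mul_sum hζ, sum_range_two_pow_pow_s_mul_pow, pow_mul,
          neg_one_mul, ← sub_eq_add_neg]
    _ = 1 / (m : K) * ∑ t ∈ Finset.Icc 1 (m - 1),
          (ζ ^ (t * a))⁻¹ * ∏ k ∈ Finset.range ν, (1 - ζ ^ (t * 2 ^ k)) := by
        rw [Finset.sum_range_eq_add_Ico _ (NeZero.pos m), trivial_root, mul_zero, zero_add,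
          Finset.Icc_sub_one_right_eq_Ico_of_not_isMin (by simpa using NeZero.ne m)]

end RootsOfUnity

theorem exp_div_pow (z w : ℂ) (n : ℕ) : Complex.exp (z / w) ^ n = Complex.exp (z * n / w) := by
  rw [← Complex.exp_nat_mul, ← mul_div_assoc, mul_comm]

/-- Formula (18): for `m > 1`, `a < m` and `ν ≥ 1`,
`S_{m,a}(2^ν) = (1/m) Σ_{t=1}^{m-1} e^{-2πi t a/m} Π_{k<ν} (1 − e^{2πi t 2^k/m})`. -/
theorem S_two_pow_formula (m : ℕ) (hm : 1 < m) (a : ℕ) (ha : a < m)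
    (ν : ℕ) (hν : 1 ≤ ν) :
    (S m a (2 ^ ν) : ℂ) =
      (1 / (m : ℂ)) * ∑ t ∈ Finset.Icc 1 (m - 1),
        Complex.exp (-(2 * Real.pi * Complex.I * t * a / m)) *
          ∏ k ∈ Finset.range ν,
            (1 - Complex.exp (2 * Real.pi * Complex.I * t * 2 ^ k / m)) := by
  have hζ := Complex.isPrimitiveRoot_exp m (Nat.ne_zero_of_lt hm)
  simpa only [exp_div_pow, Complex.exp_neg, Nat.cast_mul, Nat.cast_pow, Nat.cast_ofNat,
    ← mul_assoc] using S_two_pow_formula_general hζ ha hν
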